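/- Let C be a 2-reduced cocommutative dg coalgebra over ℚ and t : C ⇝ ΩC its universal twisting chain. If f : A → B is a quasi-isomorphism of left dg ΩC-modules, then the induced map t_*f : C ⊗^t A → C ⊗^t B is a quasi-isomorphism of C-comodules; that is, the twisted coextension functor t_* preserves quasi-isomorphisms. -/

import Mathlib

open scoped TensorProduct

noncomputable section

/-- A homologically graded differential graded `ℚ`-vector space (chain complex of
`ℚ`-vector spaces presented as a graded module with a degree `-1` square-zero differential). -/
structure DGVect : Type 1 where
  carrier : Type
  [isAddCommGroup : AddCommGroup carrier]
  [isModule : Module ℚ carrier]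
  grading : ℤ → Submodule ℚ carrier
  [isDecomp : DirectSum.Decomposition grading]
  d : carrier →ₗ[ℚ] carrier
  d_mem : ∀ (n : ℤ), ∀ x ∈ grading n, d x ∈ grading (n - 1)
  d_sq : d.comp d = 0

attribute [instance] DGVect.isAddCommGroup DGVect.isModule DGVect.isDecomp

/-- The operator acting on the degree `n` graded component by `(-1)^(k*n)`. -/
def signOpOf {V : Type} [AddCommGroup V] [Module ℚ V] (g : ℤ → Submodule ℚ V)
    [DirectSum.Decomposition g] (k : ℤ) : V →ₗ[ℚ] V :=
  (DirectSum.toModule ℚ ℤ V fun n => ((-1 : ℚ) ^ (k * n)) • (g n).subtype).comp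
    (DirectSum.decomposeLinearEquiv g).toLinearMap

/-- The Koszul parity operator, acting by `(-1)^n` in degree `n`. -/
def parityOf {V : Type} [AddCommGroup V] [Module ℚ V] (g : ℤ → Submodule ℚ V)
    [DirectSum.Decomposition g] : V →ₗ[ℚ] V := signOpOf g 1

def DGVect.parity (V : DGVect) : V.carrier →ₗ[ℚ] V.carrier := parityOf V.grading

/-- A graded object is bounded below if it vanishes in all sufficiently negative degrees. -/
def DGVect.BoundedBelow (V : DGVect) : Prop := ∃ b : ℤ, ∀ n : ℤ, n < b → V.grading n = ⊥

/-- The Koszul signed braiding `v ⊗ w ↦ (-1)^{|v||w|} w ⊗ v` of graded vector spaces. -/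
def kSwapOf {V W : Type} [AddCommGroup V] [Module ℚ V] [AddCommGroup W] [Module ℚ W]
    (gV : ℤ → Submodule ℚ V) (gW : ℤ → Submodule ℚ W)
    [DirectSum.Decomposition gV] [DirectSum.Decomposition gW] :
    V ⊗[ℚ] W →ₗ[ℚ] W ⊗[ℚ] V :=
  TensorProduct.lift
    ((DirectSum.toModule ℚ ℤ (W →ₗ[ℚ] W ⊗[ℚ] V) (fun i =>
        (((DirectSum.toModule ℚ ℤ (V →ₗ[ℚ] W ⊗[ℚ] V) (fun j =>
              ((-1 : ℚ) ^ (i * j)) • ((TensorProduct.mk ℚ W V).comp (gW j).subtype))).comp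
            (DirectSum.decomposeLinearEquiv gW).toLinearMap).flip).comp
          (gV i).subtype)).comp
      (DirectSum.decomposeLinearEquiv gV).toLinearMap)

/-- The degree `n` part of the tensor product grading:
the span of the homogeneous tensors of total degree `n`. -/
def tensorGrading {V W : Type} [AddCommGroup V] [Module ℚ V] [AddCommGroup W] [Module ℚ W]
    (gV : ℤ → Submodule ℚ V) (gW : ℤ → Submodule ℚ W) (n : ℤ) : Submodule ℚ (V ⊗[ℚ] W) :=
  ⨆ p : {p : ℤ × ℤ // p.1 + p.2 = n},
    LinearMap.range (TensorProduct.map (gV p.1.1).subtype (gW p.1.2).subtype)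

/-- `f` is a quasi-isomorphism from the complex `(V, dV)` to the complex `(W, dW)`:
it induces a bijection on homology (`ker d / im d`). -/
def IsQuasiIso {V W : Type} [AddCommGroup V] [Module ℚ V] [AddCommGroup W] [Module ℚ W]
    (dV : V →ₗ[ℚ] V) (dW : W →ₗ[ℚ] W) (f : V →ₗ[ℚ] W) : Prop :=
  (∀ x : V, dV x = 0 → (∃ y, f x = dW y) → ∃ z, x = dV z) ∧
  (∀ w : W, dW w = 0 → ∃ x, dV x = 0 ∧ ∃ y, w - f x = dW y)

/-- A differential graded algebra over `ℚ`. -/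
structure DGAlgebra extends DGVect where
  mul : carrier →ₗ[ℚ] carrier →ₗ[ℚ] carrier
  one : carrier
  one_mem : one ∈ grading 0
  mul_mem : ∀ (i j : ℤ) (x y : carrier), x ∈ grading i → y ∈ grading j →
    mul x y ∈ grading (i + j)
  mul_assoc' : ∀ x y z : carrier, mul (mul x y) z = mul x (mul y z)
  one_mul' : ∀ x : carrier, mul one x = x
  mul_one' : ∀ x : carrier, mul x one = x
  leibniz : ∀ (i : ℤ) (x y : carrier), x ∈ grading i →
    d (mul x y) = mul (d x) y + ((-1 : ℚ) ^ i) • mul x (d y)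

/-- The multiplication of a dg algebra as a map out of the tensor product. -/
def DGAlgebra.mulMap (A : DGAlgebra) : A.carrier ⊗[ℚ] A.carrier →ₗ[ℚ] A.carrier :=
  TensorProduct.lift A.mul

/-- A dg algebra is connective if it is concentrated in non-negative degrees. -/
def DGAlgebra.Connective (A : DGAlgebra) : Prop := ∀ n : ℤ, n < 0 → A.grading n = ⊥

/-- A (coassociative counital) differential graded coalgebra over `ℚ`,
non-negatively graded. -/
structure DGCoalgebra extends DGVect where
  comul : carrier →ₗ[ℚ] carrier ⊗[ℚ] carrier
  counit : carrier →ₗ[ℚ] ℚ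
  nonneg : ∀ n : ℤ, n < 0 → grading n = ⊥
  comul_mem : ∀ (n : ℤ), ∀ x ∈ grading n, comul x ∈ tensorGrading grading grading n
  counit_zero : ∀ (n : ℤ), n ≠ 0 → ∀ x ∈ grading n, counit x = 0
  coassoc : (TensorProduct.assoc ℚ carrier carrier carrier).toLinearMap.comp
      ((TensorProduct.map comul LinearMap.id).comp comul)
      = (TensorProduct.map LinearMap.id comul).comp comul
  counit_comul_left : (TensorProduct.lid ℚ carrier).toLinearMap.comp
      ((TensorProduct.map counit LinearMap.id).comp comul) = LinearMap.id
  counit_comul_right : (TensorProduct.rid ℚ carrier).toLinearMap.comp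
      ((TensorProduct.map LinearMap.id counit).comp comul) = LinearMap.id
  comul_chain : comul.comp d
      = (TensorProduct.map d LinearMap.id + TensorProduct.map (parityOf grading) d).comp comul
  counit_chain : counit.comp d = 0

/-- Cocommutativity: the comultiplication is invariant under the Koszul signed twist. -/
def DGCoalgebra.Cocomm (C : DGCoalgebra) : Prop :=
  (kSwapOf C.grading C.grading).comp C.comul = C.comul

/-- A coaugmented dg coalgebra: a dg coalgebra with a coaugmentation `η : ℚ → C`,
recorded by the grouplike element `one = η 1` in degree `0`. -/
structure CoaugDGCoalgebra extends DGCoalgebra where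
  one : carrier
  one_mem : one ∈ grading 0
  counit_one : counit one = 1
  comul_one : comul one = one ⊗ₜ[ℚ] one

/-- A coaugmented dg coalgebra is 2-reduced if `C₀ = ℚ` (spanned by the coaugmentation)
and `C₁ = 0`. -/
def CoaugDGCoalgebra.TwoReduced (C : CoaugDGCoalgebra) : Prop :=
  C.grading 0 = Submodule.span ℚ {C.one} ∧ C.grading 1 = ⊥

/-- A twisting chain `τ : C ⇝ A`: a degree `-1` linear map satisfying
`d(τc) = -τ(dc) - (-1)^{|c₍₀₎|} τ(c₍₀₎)·τ(c₍₁₎)`. -/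
structure TwistingChain (C : DGCoalgebra) (A : DGAlgebra) where
  toFun : C.carrier →ₗ[ℚ] A.carrier
  mem : ∀ (n : ℤ), ∀ x ∈ C.grading n, toFun x ∈ A.grading (n - 1)
  twist : A.d.comp toFun + toFun.comp C.d
      + A.mulMap.comp ((TensorProduct.map (toFun.comp (parityOf C.grading)) toFun).comp C.comul)
      = 0

/-- A left dg module over a dg algebra. -/
structure DGModule (A : DGAlgebra) extends DGVect where
  smul : A.carrier →ₗ[ℚ] carrier →ₗ[ℚ] carrier
  smul_mem : ∀ (i j : ℤ) (a : A.carrier) (x : carrier), a ∈ A.grading i → x ∈ grading j →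
    smul a x ∈ grading (i + j)
  one_smul' : ∀ x : carrier, smul A.one x = x
  mul_smul' : ∀ (a b : A.carrier) (x : carrier), smul (A.mul a b) x = smul a (smul b x)
  leibniz : ∀ (i : ℤ) (a : A.carrier) (x : carrier), a ∈ A.grading i →
    d (smul a x) = smul (A.d a) x + ((-1 : ℚ) ^ i) • smul a (d x)

/-- The action of a dg module as a map out of the tensor product. -/
def DGModule.actionMap {A : DGAlgebra} (M : DGModule A) :
    A.carrier ⊗[ℚ] M.carrier →ₗ[ℚ] M.carrier := TensorProduct.lift M.smul

/-- A left dg comodule over a dg coalgebra. -/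
structure DGComodule (C : DGCoalgebra) extends DGVect where
  coact : carrier →ₗ[ℚ] C.carrier ⊗[ℚ] carrier
  coact_mem : ∀ (n : ℤ), ∀ x ∈ grading n, coact x ∈ tensorGrading C.grading grading n
  coassoc : (TensorProduct.assoc ℚ C.carrier C.carrier carrier).toLinearMap.comp
      ((TensorProduct.map C.comul LinearMap.id).comp coact)
      = (TensorProduct.map LinearMap.id coact).comp coact
  counit_coact : (TensorProduct.lid ℚ carrier).toLinearMap.comp
      ((TensorProduct.map C.counit LinearMap.id).comp coact) = LinearMap.id
  coact_chain : coact.comp d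
      = (TensorProduct.map C.d LinearMap.id + TensorProduct.map (parityOf C.grading) d).comp coact

/-- Morphisms of dg modules: degree `0` graded chain maps commuting with the action. -/
def IsModuleHom (A : DGAlgebra) (M M' : DGModule A)
    (g : M.carrier →ₗ[ℚ] M'.carrier) : Prop :=
  (∀ (n : ℤ), ∀ x ∈ M.grading n, g x ∈ M'.grading n) ∧
  g.comp M.d = M'.d.comp g ∧
  g.comp M.actionMap = M'.actionMap.comp (TensorProduct.map LinearMap.id g)

/-- Morphisms of dg comodules: degree `0` graded chain maps commuting with the coaction. -/
def IsComoduleHom (C : DGCoalgebra) (N N' : DGComodule C)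
    (f : N.carrier →ₗ[ℚ] N'.carrier) : Prop :=
  (∀ (n : ℤ), ∀ x ∈ N.grading n, f x ∈ N'.grading n) ∧
  f.comp N.d = N'.d.comp f ∧
  (TensorProduct.map LinearMap.id f).comp N.coact = N'.coact.comp f

/-- The `A`-action on a twisted extension `A ⊗_τ N`: multiplication on the first factor. -/
def extAction (A : DGAlgebra) (N : Type) [AddCommGroup N] [Module ℚ N] :
    A.carrier ⊗[ℚ] (A.carrier ⊗[ℚ] N) →ₗ[ℚ] A.carrier ⊗[ℚ] N :=
  (TensorProduct.map A.mulMap LinearMap.id).comp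
    (TensorProduct.assoc ℚ A.carrier A.carrier N).symm.toLinearMap

/-- The differential of the twisted extension `A ⊗_τ N`:
`d(a ⊗ n) = da ⊗ n + (-1)^{|a|} a ⊗ dn - (-1)^{|a|} a·τ(n₍₀₎) ⊗ n₍₁₎`
for a `C`-comodule `(N, dN, ρ)`. -/
def extDiff (C : DGCoalgebra) (A : DGAlgebra) (τ : TwistingChain C A)
    (N : Type) [AddCommGroup N] [Module ℚ N]
    (dN : N →ₗ[ℚ] N) (ρ : N →ₗ[ℚ] C.carrier ⊗[ℚ] N) :
    A.carrier ⊗[ℚ] N →ₗ[ℚ] A.carrier ⊗[ℚ] N :=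
  TensorProduct.map A.d LinearMap.id + TensorProduct.map (parityOf A.grading) dN
    - (TensorProduct.map
        (A.mulMap.comp (TensorProduct.map (parityOf A.grading) τ.toFun)) LinearMap.id).comp
        ((TensorProduct.assoc ℚ A.carrier C.carrier N).symm.toLinearMap.comp
          (TensorProduct.map LinearMap.id ρ))

/-- The `C`-coaction on a twisted coextension `C ⊗^τ M`, namely `Δ ⊗ id`. -/
def coextCoact (C : DGCoalgebra) (M : Type) [AddCommGroup M] [Module ℚ M] :
    C.carrier ⊗[ℚ] M →ₗ[ℚ] C.carrier ⊗[ℚ] (C.carrier ⊗[ℚ] M) :=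
  (TensorProduct.assoc ℚ C.carrier C.carrier M).toLinearMap.comp
    (TensorProduct.map C.comul LinearMap.id)

/-- The differential of the twisted coextension `C ⊗^τ M`, expressed in terms of the map
`tact : C ⊗ M → M`, `c ⊗ m ↦ τ(c)·m`:
`d(c ⊗ m) = dc ⊗ m + (-1)^{|c|} c ⊗ dm + (-1)^{|c₍₀₎|} c₍₀₎ ⊗ τ(c₍₁₎)·m`. -/
def coextDiffFrom (C : DGCoalgebra) (M : Type) [AddCommGroup M] [Module ℚ M]
    (dM : M →ₗ[ℚ] M) (tact : C.carrier ⊗[ℚ] M →ₗ[ℚ] M) :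
    C.carrier ⊗[ℚ] M →ₗ[ℚ] C.carrier ⊗[ℚ] M :=
  TensorProduct.map C.d LinearMap.id + TensorProduct.map (parityOf C.grading) dM
    + (TensorProduct.map (parityOf C.grading) tact).comp (coextCoact C M)

/-- The differential of the twisted coextension `C ⊗^τ M` of an `A`-module `(M, dM, act)`. -/
def coextDiff (C : DGCoalgebra) (A : DGAlgebra) (τ : TwistingChain C A)
    (M : Type) [AddCommGroup M] [Module ℚ M]
    (dM : M →ₗ[ℚ] M) (act : A.carrier ⊗[ℚ] M →ₗ[ℚ] M) :
    C.carrier ⊗[ℚ] M →ₗ[ℚ] C.carrier ⊗[ℚ] M :=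
  coextDiffFrom C M dM (act.comp (TensorProduct.map τ.toFun LinearMap.id))

/-- Morphisms of dg algebras. -/
structure DGAlgebraHom (A B : DGAlgebra) where
  toLinearMap : A.carrier →ₗ[ℚ] B.carrier
  mem : ∀ (n : ℤ), ∀ x ∈ A.grading n, toLinearMap x ∈ B.grading n
  chain : toLinearMap.comp A.d = B.d.comp toLinearMap
  map_one : toLinearMap A.one = B.one
  map_mul : ∀ x y : A.carrier, toLinearMap (A.mul x y) = B.mul (toLinearMap x) (toLinearMap y)

/-- Data exhibiting a dg algebra as the cobar construction `ΩC` of a coaugmented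
dg coalgebra `C`, via the universal twisting chain `t : C ⇝ ΩC`:
dg algebra maps `ΩC → A` correspond bijectively to twisting chains `C ⇝ A`
vanishing on the coaugmentation. -/
structure CobarData (C : CoaugDGCoalgebra) where
  alg : DGAlgebra
  t : TwistingChain C.toDGCoalgebra alg
  t_one : t.toFun C.one = 0
  univ : ∀ (A : DGAlgebra) (τ : TwistingChain C.toDGCoalgebra A), τ.toFun C.one = 0 →
    ∃! F : DGAlgebraHom alg A, F.toLinearMap.comp t.toFun = τ.toFun

/-- A morphism of `C`-comodules is a `t`-equivalence if the induced morphism of twisted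
extensions `ΩC ⊗_t N → ΩC ⊗_t M` is a quasi-isomorphism. -/
def IsTEquiv (C : CoaugDGCoalgebra) (Ω : CobarData C) (N M : DGComodule C.toDGCoalgebra)
    (f : N.carrier →ₗ[ℚ] M.carrier) : Prop :=
  IsQuasiIso (extDiff C.toDGCoalgebra Ω.alg Ω.t N.carrier N.d N.coact)
    (extDiff C.toDGCoalgebra Ω.alg Ω.t M.carrier M.d M.coact)
    (TensorProduct.map LinearMap.id f)

/-! ## Statement 5: `t_*` preserves quasi-isomorphisms -/

/-!
The functor `t_*` commutes with mapping cones, up to an isomorphism given by signs, so it is enough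
that it preserves acyclicity. An acyclic complex `M` over a field has a contraction `s`, and
`c ⊗ m ↦ (-1)^{|c|} c ⊗ s m` contracts `C ⊗^t M` up to an error `c ⊗ m ↦ c₍₀₎ ⊗ ψ(c₍₁₎ ⊗ m)`, where
`ψ` vanishes on `C₀ ⊗ M` because `t` vanishes on `C₀`. The error lowers the filtration of `C ⊗ M` by
the degree in `C`, which is exhaustive and starts at `0`, so cycles are seen to be boundaries by
induction along it.
-/

section LinearAlgebra

theorem tensorMap_neg_left {R M N P Q : Type*} [CommRing R] [AddCommGroup M] [Module R M]
    [AddCommGroup N] [Module R N] [AddCommGroup P] [Module R P] [AddCommGroup Q] [Module R Q]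
    (f : M →ₗ[R] P) (g : N →ₗ[R] Q) :
    TensorProduct.map (-f) g = -TensorProduct.map f g :=
  LinearMap.map_neg₂ (TensorProduct.mapBilinear (.id R) M N P Q) f g

theorem tensorMap_neg_right {R M N P Q : Type*} [CommRing R] [AddCommGroup M] [Module R M]
    [AddCommGroup N] [Module R N] [AddCommGroup P] [Module R P] [AddCommGroup Q] [Module R Q]
    (f : M →ₗ[R] P) (g : N →ₗ[R] Q) :
    TensorProduct.map f (-g) = -TensorProduct.map f g :=
  map_neg (TensorProduct.mapBilinear (.id R) M N P Q f) g

theorem exists_contraction_of_exact {K V : Type*} [DivisionRing K] [AddCommGroup V] [Module K V]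
    {d : V →ₗ[K] V} (h : Function.Exact d d) :
    ∃ s : V →ₗ[K] V, d ∘ₗ s + s ∘ₗ d = .id := by
  obtain ⟨r, hr⟩ := d.rangeRestrict.exists_rightInverse_of_surjective d.range_rangeRestrict
  obtain ⟨g, hg⟩ := r.exists_extend
  have hdgd (x : V) : d (g (d x)) = d x := by
    have hgr : g (d x) = r (d.rangeRestrict x) := LinearMap.congr_fun hg (d.rangeRestrict x)
    rw [hgr]
    exact congrArg Subtype.val (LinearMap.congr_fun hr (d.rangeRestrict x))
  refine ⟨g ∘ₗ (.id - g ∘ₗ d), LinearMap.ext fun x => ?_⟩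
  obtain ⟨z, hz⟩ := (h (x - g (d x))).1 (by rw [map_sub, hdgd, sub_self])
  have hds : d (g (x - g (d x))) = x - g (d x) := by rw [← hz, hdgd]
  change d (g (x - g (d x))) + g (d x - g (d (d x))) = x
  rw [hds, h.apply_apply_eq_zero, map_zero, sub_zero, sub_add_cancel]

theorem exact_of_filtered_contraction {R V : Type*} [Ring R] [AddCommGroup V] [Module R V]
    {d s : V →ₗ[R] V} (hd : d ∘ₗ d = 0) (F : ℕ → Submodule R V) (hbot : F 0 = ⊥)
    (hexh : ∀ x, ∃ p, x ∈ F p)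
    (hs : ∀ p, ∀ x ∈ F (p + 1), d (s x) + s (d x) - x ∈ F p) : Function.Exact d d := by
  have hdd (x : V) : d (d x) = 0 := LinearMap.congr_fun hd x
  refine fun x => ⟨fun hx => ?_, fun ⟨y, hy⟩ => hy ▸ hdd y⟩
  obtain ⟨p, hp⟩ := hexh x
  induction p generalizing x with
  | zero =>
    rw [hbot, Submodule.mem_bot] at hp
    exact ⟨0, by rw [hp, map_zero]⟩
  | succ p ih =>
    have hlow : d (s x) - x ∈ F p := by simpa [hx] using hs p x hp
    obtain ⟨y, hy⟩ := ih _ (by rw [map_sub, hdd, hx, sub_zero]) hlow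
    exact ⟨s x - y, by rw [map_sub, hy, sub_sub_cancel]⟩

end LinearAlgebra

section MappingCone

variable {R V W : Type*} [Ring R] [AddCommGroup V] [Module R V] [AddCommGroup W] [Module R W]

/-- The differential `(v, w) ↦ (-dv, fv + dw)` of the mapping cone of `f : (V, dV) → (W, dW)`. -/
def coneDiff (dV : V →ₗ[R] V) (dW : W →ₗ[R] W) (f : V →ₗ[R] W) : V × W →ₗ[R] V × W :=
  (-(dV ∘ₗ .fst R V W)).prod (f ∘ₗ .fst R V W + dW ∘ₗ .snd R V W)

@[simp]
theorem coneDiff_apply (dV : V →ₗ[R] V) (dW : W →ₗ[R] W) (f : V →ₗ[R] W) (x : V × W) :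
    coneDiff dV dW f x = (-dV x.1, f x.1 + dW x.2) := rfl

theorem coneDiff_comp_coneDiff {dV : V →ₗ[R] V} {dW : W →ₗ[R] W} {f : V →ₗ[R] W}
    (hV : dV ∘ₗ dV = 0) (hW : dW ∘ₗ dW = 0) (hf : f ∘ₗ dV = dW ∘ₗ f) :
    coneDiff dV dW f ∘ₗ coneDiff dV dW f = 0 := by
  simp only [LinearMap.ext_iff, LinearMap.comp_apply, LinearMap.zero_apply] at hV hW hf
  exact LinearMap.ext fun x => by simp [hV, hW, hf]

end MappingCone

section QuasiIso

variable {V W : Type} [AddCommGroup V] [Module ℚ V] [AddCommGroup W] [Module ℚ W]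
  {dV : V →ₗ[ℚ] V} {dW : W →ₗ[ℚ] W} {f : V →ₗ[ℚ] W}

theorem IsQuasiIso.exact_coneDiff (hq : IsQuasiIso dV dW f) (hV : dV ∘ₗ dV = 0)
    (hW : dW ∘ₗ dW = 0) (hf : f ∘ₗ dV = dW ∘ₗ f) :
    Function.Exact (coneDiff dV dW f) (coneDiff dV dW f) := by
  refine LinearMap.exact_of_comp_eq_zero_of_ker_le_range (coneDiff_comp_coneDiff hV hW hf) ?_
  rintro ⟨v, w⟩ hvw
  obtain ⟨hv, hw⟩ : dV v = 0 ∧ f v + dW w = 0 := by simpa using hvw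
  obtain ⟨z, rfl⟩ := hq.1 v hv ⟨-w, by rw [map_neg, eq_neg_of_add_eq_zero_left hw]⟩
  have hfd : f (dV z) = dW (f z) := LinearMap.congr_fun hf z
  obtain ⟨x, hx, y, hy⟩ := hq.2 (f z + w) (by rw [map_add, ← hfd, hw])
  refine ⟨(x - z, y), ?_⟩
  simp only [coneDiff_apply, map_sub, hx, ← hy, Prod.mk.injEq]
  constructor <;> abel

theorem isQuasiIso_of_exact_coneDiff
    (h : Function.Exact (coneDiff dV dW f) (coneDiff dV dW f)) : IsQuasiIso dV dW f := by
  constructor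
  · rintro v hv ⟨w, hw⟩
    obtain ⟨z, hz⟩ := (h (v, -w)).1 (by simp [hv, hw])
    exact ⟨-z.1, by simpa using (congrArg Prod.fst hz).symm⟩
  · intro w hw
    obtain ⟨z, hz⟩ := (h (0, w)).1 (by simp [hw])
    obtain ⟨hz₁, hz₂⟩ : dV z.1 = 0 ∧ f z.1 + dW z.2 = w := by simpa using hz
    exact ⟨z.1, hz₁, z.2, by rw [← hz₂, add_sub_cancel_left]⟩

end QuasiIso

section Parity

variable {V W : Type} [AddCommGroup V] [Module ℚ V] [AddCommGroup W] [Module ℚ W]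
  (gV : ℤ → Submodule ℚ V) (gW : ℤ → Submodule ℚ W)

theorem linearMap_ext_of_homogeneous [DirectSum.Decomposition gV] {u v : V →ₗ[ℚ] W}
    (h : ∀ n, ∀ x ∈ gV n, u x = v x) : u = v := by
  ext x
  induction x using DirectSum.Decomposition.inductionOn gV with
  | zero => simp only [map_zero]
  | homogeneous x => exact h _ x x.2
  | add x y hx hy => rw [map_add, map_add, hx, hy]

variable {gV} in
theorem parityOf_apply_of_mem [DirectSum.Decomposition gV] {n : ℤ} {x : V} (hx : x ∈ gV n) :
    parityOf gV x = (-1 : ℚ) ^ n • x := by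
  lift x to gV n using hx
  simp only [parityOf, signOpOf, one_mul, LinearMap.comp_apply, LinearEquiv.coe_coe,
    DirectSum.decomposeLinearEquiv_apply, DirectSum.decompose_coe]
  rw [← DirectSum.lof_eq_of ℚ, DirectSum.toModule_lof]
  rfl

theorem parityOf_comp_parityOf [DirectSum.Decomposition gV] :
    parityOf gV ∘ₗ parityOf gV = .id := by
  refine linearMap_ext_of_homogeneous gV fun n x hx => ?_
  simp [parityOf_apply_of_mem hx, smul_smul, ← mul_zpow]

theorem parityOf_comp_of_degree [DirectSum.Decomposition gV] [DirectSum.Decomposition gW] {k : ℤ}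
    {u : V →ₗ[ℚ] W} (hu : ∀ n, ∀ x ∈ gV n, u x ∈ gW (n + k)) :
    parityOf gW ∘ₗ u = (-1 : ℚ) ^ k • (u ∘ₗ parityOf gV) := by
  refine linearMap_ext_of_homogeneous gV fun n x hx => ?_
  simp [parityOf_apply_of_mem hx, parityOf_apply_of_mem (hu n x hx), smul_smul,
    zpow_add₀ (show (-1 : ℚ) ≠ 0 by norm_num), mul_comm]

variable {gV gW}

theorem tensorGrading_le {n : ℤ} {P : Submodule ℚ (V ⊗[ℚ] W)}
    (h : ∀ i j, i + j = n → ∀ x ∈ gV i, ∀ y ∈ gW j, x ⊗ₜ[ℚ] y ∈ P) :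
    tensorGrading gV gW n ≤ P := by
  refine iSup_le ?_
  rintro ⟨⟨i, j⟩, hij⟩ _ ⟨z, rfl⟩
  induction z using TensorProduct.induction_on with
  | zero => simp
  | tmul x y => exact h i j hij x x.2 y y.2
  | add a b ha hb => rw [map_add]; exact P.add_mem ha hb

theorem map_parityOf_of_mem_tensorGrading [DirectSum.Decomposition gV]
    [DirectSum.Decomposition gW] {n : ℤ} {z : V ⊗[ℚ] W} (hz : z ∈ tensorGrading gV gW n) :
    TensorProduct.map (parityOf gV) (parityOf gW) z = (-1 : ℚ) ^ n • z := by
  have hle : tensorGrading gV gW n ≤ LinearMap.eqLocus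
      (TensorProduct.map (parityOf gV) (parityOf gW)) ((-1 : ℚ) ^ n • LinearMap.id) := by
    refine tensorGrading_le fun i j hij x hx y hy => ?_
    rw [LinearMap.mem_eqLocus, TensorProduct.map_tmul, parityOf_apply_of_mem hx,
      parityOf_apply_of_mem hy, TensorProduct.smul_tmul_smul, ← zpow_add₀ (by norm_num), hij,
      LinearMap.smul_apply, LinearMap.id_apply]
  exact hle hz

end Parity

theorem DGVect.parityOf_comp_d (V : DGVect) :
    parityOf V.grading ∘ₗ V.d = -(V.d ∘ₗ parityOf V.grading) := by
  simpa using parityOf_comp_of_degree V.grading V.grading (k := -1) V.d_mem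

theorem TwistingChain.parityOf_comp {C : DGCoalgebra} {A : DGAlgebra} (τ : TwistingChain C A) :
    parityOf A.grading ∘ₗ τ.toFun = -(τ.toFun ∘ₗ parityOf C.grading) := by
  simpa using parityOf_comp_of_degree C.grading A.grading (k := -1) τ.mem

theorem DGCoalgebra.comul_comp_parityOf (C : DGCoalgebra) :
    C.comul ∘ₗ parityOf C.grading
      = TensorProduct.map (parityOf C.grading) (parityOf C.grading) ∘ₗ C.comul := by
  refine linearMap_ext_of_homogeneous C.grading fun n x hx => ?_
  rw [LinearMap.comp_apply, LinearMap.comp_apply, parityOf_apply_of_mem hx, map_smul,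
    map_parityOf_of_mem_tensorGrading (C.comul_mem n x hx)]

section Coaction

variable {C : DGCoalgebra} {M N : Type} [AddCommGroup M] [Module ℚ M] [AddCommGroup N] [Module ℚ N]

theorem assoc_comp_map_comul {P Q : Type} [AddCommGroup P] [Module ℚ P] [AddCommGroup Q]
    [Module ℚ Q] (v : C.carrier →ₗ[ℚ] P) (w : C.carrier →ₗ[ℚ] Q) (g : M →ₗ[ℚ] N) :
    (TensorProduct.assoc ℚ P Q N).toLinearMap
        ∘ₗ TensorProduct.map (TensorProduct.map v w ∘ₗ C.comul) g
      = TensorProduct.map v (TensorProduct.map w g) ∘ₗ coextCoact C M := by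
  rw [coextCoact, ← LinearMap.comp_assoc, TensorProduct.map_map_comp_assoc_eq,
    LinearMap.comp_assoc, ← TensorProduct.map_comp, LinearMap.comp_id]

theorem coextCoact_comp_map {u v w : C.carrier →ₗ[ℚ] C.carrier}
    (hu : C.comul ∘ₗ u = TensorProduct.map v w ∘ₗ C.comul) (g : M →ₗ[ℚ] N) :
    coextCoact C N ∘ₗ TensorProduct.map u g
      = TensorProduct.map v (TensorProduct.map w g) ∘ₗ coextCoact C M := by
  rw [← assoc_comp_map_comul, ← hu, coextCoact, LinearMap.comp_assoc, ← TensorProduct.map_comp,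
    LinearMap.id_comp]

theorem coextCoact_naturality (g : M →ₗ[ℚ] N) :
    coextCoact C N ∘ₗ TensorProduct.map .id g
      = TensorProduct.map .id (TensorProduct.map .id g) ∘ₗ coextCoact C M :=
  coextCoact_comp_map (by rw [TensorProduct.map_id, LinearMap.id_comp, LinearMap.comp_id]) g

theorem coextCoact_comp_map_parityOf (g : M →ₗ[ℚ] N) :
    coextCoact C N ∘ₗ TensorProduct.map (parityOf C.grading) g
      = TensorProduct.map (parityOf C.grading) (TensorProduct.map (parityOf C.grading) g)
          ∘ₗ coextCoact C M :=
  coextCoact_comp_map C.comul_comp_parityOf g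

theorem coextCoact_comp_map_d :
    coextCoact C M ∘ₗ TensorProduct.map C.d .id
      = (TensorProduct.map C.d .id
          + TensorProduct.map (parityOf C.grading) (TensorProduct.map C.d .id))
          ∘ₗ coextCoact C M := by
  rw [coextCoact, LinearMap.comp_assoc, ← TensorProduct.map_comp, C.comul_chain,
    LinearMap.add_comp, LinearMap.id_comp, TensorProduct.map_add_left, LinearMap.comp_add,
    assoc_comp_map_comul, assoc_comp_map_comul, TensorProduct.map_id, ← LinearMap.add_comp]
  rfl

theorem coextCoact_coassoc :
    coextCoact C (C.carrier ⊗[ℚ] M) ∘ₗ coextCoact C M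
      = TensorProduct.map .id (coextCoact C M) ∘ₗ coextCoact C M := by
  have hpentagon : (TensorProduct.assoc ℚ C.carrier C.carrier (C.carrier ⊗[ℚ] M)).toLinearMap ∘ₗ
        (TensorProduct.assoc ℚ (C.carrier ⊗[ℚ] C.carrier) C.carrier M).toLinearMap
      = TensorProduct.map .id (TensorProduct.assoc ℚ C.carrier C.carrier M).toLinearMap ∘ₗ
        (TensorProduct.assoc ℚ C.carrier (C.carrier ⊗[ℚ] C.carrier) M).toLinearMap ∘ₗ
        TensorProduct.map (TensorProduct.assoc ℚ C.carrier C.carrier C.carrier).toLinearMap .id :=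
    TensorProduct.ext_fourfold fun _ _ _ _ => rfl
  calc coextCoact C (C.carrier ⊗[ℚ] M) ∘ₗ coextCoact C M
    _ = (TensorProduct.assoc ℚ C.carrier C.carrier (C.carrier ⊗[ℚ] M)).toLinearMap ∘ₗ
        (TensorProduct.assoc ℚ (C.carrier ⊗[ℚ] C.carrier) C.carrier M).toLinearMap ∘ₗ
          TensorProduct.map (TensorProduct.map C.comul .id ∘ₗ C.comul) .id := by
      rw [← LinearMap.comp_id (.id : M →ₗ[ℚ] M), TensorProduct.map_comp,
        ← LinearMap.comp_assoc (TensorProduct.map C.comul .id),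
        ← TensorProduct.map_map_comp_assoc_eq, TensorProduct.map_id]
      rfl
    _ = TensorProduct.map .id (TensorProduct.assoc ℚ C.carrier C.carrier M).toLinearMap ∘ₗ
        (TensorProduct.assoc ℚ C.carrier (C.carrier ⊗[ℚ] C.carrier) M).toLinearMap ∘ₗ
          TensorProduct.map (TensorProduct.map .id C.comul ∘ₗ C.comul) .id := by
      rw [← C.coassoc, ← LinearMap.comp_assoc, hpentagon]
      simp only [LinearMap.comp_assoc, ← TensorProduct.map_comp, LinearMap.comp_id]
    _ = TensorProduct.map .id (coextCoact C M) ∘ₗ coextCoact C M := by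
      rw [← LinearMap.comp_id (.id : M →ₗ[ℚ] M), TensorProduct.map_comp,
        ← LinearMap.comp_assoc (TensorProduct.map C.comul .id),
        ← TensorProduct.map_map_comp_assoc_eq, LinearMap.comp_assoc, ← LinearMap.comp_assoc,
        ← TensorProduct.map_comp, LinearMap.id_comp]
      rfl

theorem coextCoact_comp_coextDiffFrom (d : M →ₗ[ℚ] M) (act : C.carrier ⊗[ℚ] M →ₗ[ℚ] M) :
    coextCoact C M ∘ₗ coextDiffFrom C M d act
      = (TensorProduct.map C.d .id + TensorProduct.map (parityOf C.grading)
          (coextDiffFrom C M d act)) ∘ₗ coextCoact C M := by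
  have hact : coextCoact C M ∘ₗ TensorProduct.map (parityOf C.grading) act ∘ₗ coextCoact C M
      = TensorProduct.map (parityOf C.grading)
          (TensorProduct.map (parityOf C.grading) act ∘ₗ coextCoact C M) ∘ₗ coextCoact C M := by
    rw [← LinearMap.comp_assoc, coextCoact_comp_map_parityOf, LinearMap.comp_assoc,
      coextCoact_coassoc, ← LinearMap.comp_assoc, ← TensorProduct.map_comp, LinearMap.comp_id]
  simp only [coextDiffFrom, LinearMap.comp_add, LinearMap.add_comp, TensorProduct.map_add_right,
    hact, coextCoact_comp_map_d, coextCoact_comp_map_parityOf]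
  abel

end Coaction

/-- A left module over a twisting chain `τ` on `C`, recorded through its differential and the map
`act : c ⊗ m ↦ τ(c) · m`, for which the twisting identity of `τ` becomes a Maurer–Cartan equation.
All Koszul signs are those of elements of `C`, so `M` carries no grading. -/
structure IsTwistedModule (C : DGCoalgebra) {M : Type} [AddCommGroup M] [Module ℚ M]
    (d : M →ₗ[ℚ] M) (act : C.carrier ⊗[ℚ] M →ₗ[ℚ] M) : Prop where
  d_comp_d : d ∘ₗ d = 0
  maurerCartan : d ∘ₗ act + act ∘ₗ coextDiffFrom C M d act = 0

/-- A chain map between twisted modules that commutes with the actions of `C`. -/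
structure IsTwistedModuleHom (C : DGCoalgebra) {M N : Type} [AddCommGroup M] [Module ℚ M]
    [AddCommGroup N] [Module ℚ N] (dM : M →ₗ[ℚ] M) (actM : C.carrier ⊗[ℚ] M →ₗ[ℚ] M)
    (dN : N →ₗ[ℚ] N) (actN : C.carrier ⊗[ℚ] N →ₗ[ℚ] N) (f : M →ₗ[ℚ] N) : Prop where
  comp_d : f ∘ₗ dM = dN ∘ₗ f
  comp_act : f ∘ₗ actM = actN ∘ₗ TensorProduct.map .id f

section CoextDifferential

variable {C : DGCoalgebra} {M N : Type} [AddCommGroup M] [Module ℚ M] [AddCommGroup N] [Module ℚ N]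

theorem IsTwistedModule.coextDiffFrom_comp_self {d : M →ₗ[ℚ] M} {act : C.carrier ⊗[ℚ] M →ₗ[ℚ] M}
    (h : IsTwistedModule C d act) :
    coextDiffFrom C M d act ∘ₗ coextDiffFrom C M d act = 0 := by
  have hact : act ∘ₗ coextDiffFrom C M d act = -(d ∘ₗ act) :=
    eq_neg_of_add_eq_zero_right h.maurerCartan
  have hcoact : TensorProduct.map (parityOf C.grading) act ∘ₗ coextCoact C M
        ∘ₗ coextDiffFrom C M d act
      = -(TensorProduct.map (C.d ∘ₗ parityOf C.grading) act
          + TensorProduct.map .id (d ∘ₗ act)) ∘ₗ coextCoact C M := by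
    rw [coextCoact_comp_coextDiffFrom, ← LinearMap.comp_assoc, LinearMap.comp_add,
      ← TensorProduct.map_comp, ← TensorProduct.map_comp, hact, C.parityOf_comp_d,
      parityOf_comp_parityOf, LinearMap.comp_id, tensorMap_neg_left, tensorMap_neg_right,
      ← neg_add, LinearMap.neg_comp]
  calc coextDiffFrom C M d act ∘ₗ coextDiffFrom C M d act
    _ = TensorProduct.map C.d .id ∘ₗ coextDiffFrom C M d act
        + TensorProduct.map (parityOf C.grading) d ∘ₗ coextDiffFrom C M d act
        + TensorProduct.map (parityOf C.grading) act ∘ₗ coextCoact C M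
            ∘ₗ coextDiffFrom C M d act := rfl
    _ = 0 := by
      rw [hcoact]
      simp only [coextDiffFrom, LinearMap.add_comp, LinearMap.comp_add, ← LinearMap.comp_assoc,
        ← TensorProduct.map_comp, C.d_sq, h.d_comp_d, C.parityOf_comp_d, parityOf_comp_parityOf,
        LinearMap.comp_id, LinearMap.id_comp, tensorMap_neg_left, TensorProduct.map_zero_left,
        TensorProduct.map_zero_right]
      abel

theorem IsTwistedModuleHom.map_comp_coextDiffFrom {dM : M →ₗ[ℚ] M}
    {actM : C.carrier ⊗[ℚ] M →ₗ[ℚ] M} {dN : N →ₗ[ℚ] N} {actN : C.carrier ⊗[ℚ] N →ₗ[ℚ] N}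
    {f : M →ₗ[ℚ] N} (hf : IsTwistedModuleHom C dM actM dN actN f) :
    TensorProduct.map .id f ∘ₗ coextDiffFrom C M dM actM
      = coextDiffFrom C N dN actN ∘ₗ TensorProduct.map .id f := by
  simp only [coextDiffFrom, LinearMap.add_comp, LinearMap.comp_add, LinearMap.comp_assoc,
    coextCoact_naturality]
  simp only [← LinearMap.comp_assoc, ← TensorProduct.map_comp, LinearMap.comp_id,
    LinearMap.id_comp, hf.comp_d, hf.comp_act]

theorem coextDiffFrom_homotopy {d s : M →ₗ[ℚ] M} (act : C.carrier ⊗[ℚ] M →ₗ[ℚ] M)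
    (hs : d ∘ₗ s + s ∘ₗ d = .id) :
    coextDiffFrom C M d act ∘ₗ TensorProduct.map (parityOf C.grading) s
        + TensorProduct.map (parityOf C.grading) s ∘ₗ coextDiffFrom C M d act
      = .id + TensorProduct.map .id
          (act ∘ₗ TensorProduct.map (parityOf C.grading) s + s ∘ₗ act) ∘ₗ coextCoact C M := by
  have hid : TensorProduct.map .id (d ∘ₗ s) + TensorProduct.map .id (s ∘ₗ d)
      = (.id : C.carrier ⊗[ℚ] M →ₗ[ℚ] C.carrier ⊗[ℚ] M) := by
    rw [← TensorProduct.map_add_right, hs, TensorProduct.map_id]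
  simp only [coextDiffFrom, LinearMap.add_comp, LinearMap.comp_add, LinearMap.comp_assoc,
    coextCoact_comp_map_parityOf]
  simp only [← LinearMap.comp_assoc, ← TensorProduct.map_comp, LinearMap.comp_id,
    LinearMap.id_comp, C.parityOf_comp_d, parityOf_comp_parityOf, tensorMap_neg_left,
    TensorProduct.map_add_right, LinearMap.add_comp, ← hid]
  abel

end CoextDifferential

section DegreeFiltration

variable {C : DGCoalgebra} {M : Type} [AddCommGroup M] [Module ℚ M]

variable (C M) in
/-- The subspace `C_{< p} ⊗ M` of `C ⊗ M`, filtering it by the degree in `C`; the strict inequality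
makes the filtration start at `0`. -/
def degreeFiltration (p : ℕ) : Submodule ℚ (C.carrier ⊗[ℚ] M) :=
  Submodule.span ℚ {z | ∃ n < (p : ℤ), ∃ c ∈ C.grading n, ∃ m : M, c ⊗ₜ[ℚ] m = z}

theorem tmul_mem_degreeFiltration {p : ℕ} {n : ℤ} (hn : n < p) {c : C.carrier}
    (hc : c ∈ C.grading n) (m : M) : c ⊗ₜ[ℚ] m ∈ degreeFiltration C M p :=
  Submodule.subset_span ⟨n, hn, c, hc, m, rfl⟩

theorem degreeFiltration_le {p : ℕ} {P : Submodule ℚ (C.carrier ⊗[ℚ] M)}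
    (h : ∀ n < (p : ℤ), ∀ c ∈ C.grading n, ∀ m : M, c ⊗ₜ[ℚ] m ∈ P) :
    degreeFiltration C M p ≤ P := by
  refine Submodule.span_le.2 ?_
  rintro _ ⟨n, hn, c, hc, m, rfl⟩
  exact h n hn c hc m

theorem degreeFiltration_mono : Monotone (degreeFiltration C M) := fun _ _ hpq =>
  degreeFiltration_le fun _ hn _ hc m =>
    tmul_mem_degreeFiltration (hn.trans_le (Int.ofNat_le.2 hpq)) hc m

theorem degreeFiltration_zero : degreeFiltration C M 0 = ⊥ := by
  refine eq_bot_iff.2 (degreeFiltration_le fun n hn c hc m => ?_)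
  rw [C.nonneg n hn, Submodule.mem_bot] at hc
  rw [hc, TensorProduct.zero_tmul, Submodule.mem_bot]

theorem exists_mem_degreeFiltration (z : C.carrier ⊗[ℚ] M) : ∃ p, z ∈ degreeFiltration C M p := by
  have hadd {x y : C.carrier ⊗[ℚ] M} (hx : ∃ p, x ∈ degreeFiltration C M p)
      (hy : ∃ p, y ∈ degreeFiltration C M p) : ∃ p, x + y ∈ degreeFiltration C M p := by
    obtain ⟨p, hp⟩ := hx
    obtain ⟨q, hq⟩ := hy
    exact ⟨max p q, add_mem (degreeFiltration_mono (le_max_left p q) hp)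
      (degreeFiltration_mono (le_max_right p q) hq)⟩
  induction z using TensorProduct.induction_on with
  | zero => exact ⟨0, zero_mem _⟩
  | add x y hx hy => exact hadd hx hy
  | tmul c m =>
    induction c using DirectSum.Decomposition.inductionOn C.grading with
    | zero => exact ⟨0, by rw [TensorProduct.zero_tmul]; exact zero_mem _⟩
    | @homogeneous n c => exact ⟨n.toNat + 1, tmul_mem_degreeFiltration (by omega) c.2 m⟩
    | add c c' hc hc' => rw [TensorProduct.add_tmul]; exact hadd hc hc'

theorem map_id_coextCoact_mem_degreeFiltration {ψ : C.carrier ⊗[ℚ] M →ₗ[ℚ] M}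
    (hψ : ∀ c ∈ C.grading 0, ∀ m, ψ (c ⊗ₜ[ℚ] m) = 0) {p : ℕ} {z : C.carrier ⊗[ℚ] M}
    (hz : z ∈ degreeFiltration C M (p + 1)) :
    TensorProduct.map .id ψ (coextCoact C M z) ∈ degreeFiltration C M p := by
  have hterm {i j : ℤ} (hij : i + j ≤ p) {a b : C.carrier} (ha : a ∈ C.grading i)
      (hb : b ∈ C.grading j) (m : M) : a ⊗ₜ[ℚ] ψ (b ⊗ₜ[ℚ] m) ∈ degreeFiltration C M p := by
    rcases lt_trichotomy j 0 with hj | rfl | hj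
    · rw [C.nonneg j hj, Submodule.mem_bot] at hb
      simp [hb]
    · simp [hψ b hb m]
    · exact tmul_mem_degreeFiltration (by omega) ha _
  suffices h : degreeFiltration C M (p + 1) ≤
      (degreeFiltration C M p).comap (TensorProduct.map .id ψ ∘ₗ coextCoact C M) from h hz
  refine degreeFiltration_le fun n hn c hc m => ?_
  have hcomul : tensorGrading C.grading C.grading n ≤ (degreeFiltration C M p).comap
      (TensorProduct.map .id ψ ∘ₗ (TensorProduct.assoc ℚ C.carrier C.carrier M).toLinearMap
        ∘ₗ (TensorProduct.mk ℚ (C.carrier ⊗[ℚ] C.carrier) M).flip m) :=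
    tensorGrading_le fun i j hij a ha b hb => hterm (by push_cast at hn; omega) ha hb m
  exact hcomul (C.comul_mem n c hc)

end DegreeFiltration

theorem IsTwistedModule.exact_coextDiffFrom {C : DGCoalgebra} {M : Type} [AddCommGroup M]
    [Module ℚ M] {d : M →ₗ[ℚ] M} {act : C.carrier ⊗[ℚ] M →ₗ[ℚ] M} (h : IsTwistedModule C d act)
    (hact : ∀ c ∈ C.grading 0, ∀ m, act (c ⊗ₜ[ℚ] m) = 0) (hd : Function.Exact d d) :
    Function.Exact (coextDiffFrom C M d act) (coextDiffFrom C M d act) := by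
  obtain ⟨s, hs⟩ := exists_contraction_of_exact hd
  refine exact_of_filtered_contraction (s := TensorProduct.map (parityOf C.grading) s)
    h.coextDiffFrom_comp_self (degreeFiltration C M) degreeFiltration_zero
    exists_mem_degreeFiltration fun p z hz => ?_
  have hhomotopy := LinearMap.congr_fun (coextDiffFrom_homotopy act hs) z
  simp only [LinearMap.add_apply, LinearMap.comp_apply, LinearMap.id_apply] at hhomotopy
  rw [hhomotopy, add_sub_cancel_left]
  refine map_id_coextCoact_mem_degreeFiltration (fun c hc m => ?_) hz
  simp [parityOf_apply_of_mem hc, hact c hc]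

section CoextensionOfCone

variable {C : DGCoalgebra} {M N : Type} [AddCommGroup M] [Module ℚ M] [AddCommGroup N]
  [Module ℚ N] {dM : M →ₗ[ℚ] M} {actM : C.carrier ⊗[ℚ] M →ₗ[ℚ] M} {dN : N →ₗ[ℚ] N}
  {actN : C.carrier ⊗[ℚ] N →ₗ[ℚ] N} {f : M →ₗ[ℚ] N}

/-- The action on a mapping cone `M[1] ⊕ N`. As `τ` has degree `-1`, moving `τ(c)` past the
shift of `M` produces the sign `-(-1)^{|c|}`. -/
def coneAct (actM : C.carrier ⊗[ℚ] M →ₗ[ℚ] M) (actN : C.carrier ⊗[ℚ] N →ₗ[ℚ] N) :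
    C.carrier ⊗[ℚ] (M × N) →ₗ[ℚ] M × N :=
  (-(actM ∘ₗ TensorProduct.map (parityOf C.grading) (.fst ℚ M N))).prod
    (actN ∘ₗ TensorProduct.map .id (.snd ℚ M N))

theorem map_fst_comp_coextDiffFrom_cone :
    TensorProduct.map (parityOf C.grading) (.fst ℚ M N)
        ∘ₗ coextDiffFrom C (M × N) (coneDiff dM dN f) (coneAct actM actN)
      = -(coextDiffFrom C M dM actM ∘ₗ TensorProduct.map (parityOf C.grading) (.fst ℚ M N)) := by
  have hdiff : LinearMap.fst ℚ M N ∘ₗ coneDiff dM dN f = -(dM ∘ₗ .fst ℚ M N) :=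
    LinearMap.fst_prod _ _
  have hact : LinearMap.fst ℚ M N ∘ₗ coneAct actM actN
      = -(actM ∘ₗ TensorProduct.map (parityOf C.grading) (.fst ℚ M N)) := LinearMap.fst_prod _ _
  simp only [coextDiffFrom, LinearMap.add_comp, LinearMap.comp_add, LinearMap.comp_assoc,
    coextCoact_comp_map_parityOf]
  simp only [← LinearMap.comp_assoc, ← TensorProduct.map_comp, hdiff, hact, C.parityOf_comp_d,
    parityOf_comp_parityOf, LinearMap.comp_id, LinearMap.id_comp, LinearMap.neg_comp,
    tensorMap_neg_left, tensorMap_neg_right, neg_add]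

theorem map_snd_comp_coextDiffFrom_cone :
    TensorProduct.map .id (.snd ℚ M N)
        ∘ₗ coextDiffFrom C (M × N) (coneDiff dM dN f) (coneAct actM actN)
      = TensorProduct.map .id f ∘ₗ TensorProduct.map (parityOf C.grading) (.fst ℚ M N)
        + coextDiffFrom C N dN actN ∘ₗ TensorProduct.map .id (.snd ℚ M N) := by
  have hdiff : LinearMap.snd ℚ M N ∘ₗ coneDiff dM dN f = f ∘ₗ .fst ℚ M N + dN ∘ₗ .snd ℚ M N :=
    LinearMap.snd_prod _ _
  have hact : LinearMap.snd ℚ M N ∘ₗ coneAct actM actN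
      = actN ∘ₗ TensorProduct.map .id (.snd ℚ M N) :=
    LinearMap.snd_prod _ _
  simp only [coextDiffFrom, LinearMap.add_comp, LinearMap.comp_add, LinearMap.comp_assoc,
    coextCoact_naturality]
  simp only [← LinearMap.comp_assoc, ← TensorProduct.map_comp, hdiff, hact,
    LinearMap.comp_id, LinearMap.id_comp, TensorProduct.map_add_right]
  abel

variable (C M N) in
/-- The identification `c ⊗ (m, n) ↦ ((-1)^{|c|} c ⊗ m, c ⊗ n)` of the coextension of a mapping
cone with the mapping cone of the coextensions; the sign is that of moving the shift past `c`. -/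
def coextConeEquiv : C.carrier ⊗[ℚ] (M × N) ≃ₗ[ℚ] (C.carrier ⊗[ℚ] M) × (C.carrier ⊗[ℚ] N) :=
  TensorProduct.prodRight ℚ ℚ C.carrier M N ≪≫ₗ
    (TensorProduct.congr (.ofInvolutive (parityOf C.grading)
      (LinearMap.congr_fun (parityOf_comp_parityOf C.grading))) (.refl ℚ M)).prodCongr
      (.refl ℚ (C.carrier ⊗[ℚ] N))

theorem coe_coextConeEquiv :
    (coextConeEquiv C M N).toLinearMap
      = (TensorProduct.map (parityOf C.grading) (.fst ℚ M N)).prod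
          (TensorProduct.map .id (.snd ℚ M N)) :=
  TensorProduct.ext' fun _ _ => rfl

theorem coextConeEquiv_comp_coextDiffFrom :
    (coextConeEquiv C M N).toLinearMap
        ∘ₗ coextDiffFrom C (M × N) (coneDiff dM dN f) (coneAct actM actN)
      = coneDiff (coextDiffFrom C M dM actM) (coextDiffFrom C N dN actN) (TensorProduct.map .id f)
        ∘ₗ (coextConeEquiv C M N).toLinearMap := by
  rw [coe_coextConeEquiv]
  exact LinearMap.ext fun z => Prod.ext (LinearMap.congr_fun map_fst_comp_coextDiffFrom_cone z)
    (LinearMap.congr_fun map_snd_comp_coextDiffFrom_cone z)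

theorem IsTwistedModuleHom.isTwistedModule_cone (hf : IsTwistedModuleHom C dM actM dN actN f)
    (hM : IsTwistedModule C dM actM) (hN : IsTwistedModule C dN actN) :
    IsTwistedModule C (coneDiff dM dN f) (coneAct actM actN) where
  d_comp_d := coneDiff_comp_coneDiff hM.d_comp_d hN.d_comp_d hf.comp_d
  maurerCartan := by
    set D := coextDiffFrom C (M × N) (coneDiff dM dN f) (coneAct actM actN)
    set p := TensorProduct.map (parityOf C.grading) (.fst ℚ M N)
    set q := TensorProduct.map (.id : C.carrier →ₗ[ℚ] C.carrier) (.snd ℚ M N)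
    have hfst : -(dM ∘ₗ (-(actM ∘ₗ p))) + -(actM ∘ₗ p ∘ₗ D) = 0 := by
      rw [map_fst_comp_coextDiffFrom_cone, LinearMap.comp_neg, LinearMap.comp_neg, neg_neg, neg_neg,
        ← LinearMap.comp_assoc, ← LinearMap.comp_assoc, ← LinearMap.add_comp, hM.maurerCartan,
        LinearMap.zero_comp]
    have hsnd : f ∘ₗ (-(actM ∘ₗ p)) + dN ∘ₗ actN ∘ₗ q + actN ∘ₗ q ∘ₗ D = 0 := by
      rw [map_snd_comp_coextDiffFrom_cone, LinearMap.comp_neg, LinearMap.comp_add,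
        ← LinearMap.comp_assoc p actM f, hf.comp_act, LinearMap.comp_assoc,
        add_add_add_comm, neg_add_cancel, zero_add, ← LinearMap.comp_assoc, ← LinearMap.comp_assoc,
        ← LinearMap.add_comp, hN.maurerCartan, LinearMap.zero_comp]
    exact LinearMap.ext fun z => Prod.ext (LinearMap.congr_fun hfst z) (LinearMap.congr_fun hsnd z)

theorem IsTwistedModuleHom.isQuasiIso_map_id (hf : IsTwistedModuleHom C dM actM dN actN f)
    (hM : IsTwistedModule C dM actM) (hN : IsTwistedModule C dN actN)
    (hactM : ∀ c ∈ C.grading 0, ∀ m, actM (c ⊗ₜ[ℚ] m) = 0)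
    (hactN : ∀ c ∈ C.grading 0, ∀ n, actN (c ⊗ₜ[ℚ] n) = 0) (hq : IsQuasiIso dM dN f) :
    IsQuasiIso (coextDiffFrom C M dM actM) (coextDiffFrom C N dN actN)
      (TensorProduct.map .id f) := by
  have hact : ∀ c ∈ C.grading 0, ∀ x, coneAct actM actN (c ⊗ₜ[ℚ] x) = 0 := fun c hc x => by
    simp [coneAct, parityOf_apply_of_mem hc, hactM c hc, hactN c hc]
  have hexact := (hf.isTwistedModule_cone hM hN).exact_coextDiffFrom hact
    (hq.exact_coneDiff hM.d_comp_d hN.d_comp_d hf.comp_d)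
  exact isQuasiIso_of_exact_coneDiff <| hexact.of_ladder_linearEquiv_of_exact
    coextConeEquiv_comp_coextDiffFrom.symm coextConeEquiv_comp_coextDiffFrom.symm

end CoextensionOfCone

section TwistingChain

variable {C : DGCoalgebra} {A : DGAlgebra}

theorem DGModule.d_comp_actionMap (M : DGModule A) :
    M.d ∘ₗ M.actionMap = M.actionMap
      ∘ₗ (TensorProduct.map A.d .id + TensorProduct.map (parityOf A.grading) M.d) := by
  refine TensorProduct.ext (linearMap_ext_of_homogeneous A.grading fun i a ha => ?_)
  ext x
  simp [DGModule.actionMap, parityOf_apply_of_mem ha, M.leibniz i a x ha]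

theorem DGModule.actionMap_comp_map_id_actionMap (M : DGModule A) :
    M.actionMap ∘ₗ TensorProduct.map .id M.actionMap
        ∘ₗ (TensorProduct.assoc ℚ A.carrier A.carrier M.carrier).toLinearMap
      = M.actionMap ∘ₗ TensorProduct.map A.mulMap .id :=
  TensorProduct.ext_threefold fun a b x => (M.mul_smul' a b x).symm

/-- The action `c ⊗ x ↦ τ(c) · x` of `C` on an `A`-module along a twisting chain `τ : C ⇝ A`. -/
def TwistingChain.act (τ : TwistingChain C A) (M : DGModule A) :
    C.carrier ⊗[ℚ] M.carrier →ₗ[ℚ] M.carrier :=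
  M.actionMap ∘ₗ TensorProduct.map τ.toFun .id

theorem TwistingChain.act_comp_map (τ : TwistingChain C A) (M : DGModule A) {V W : Type}
    [AddCommGroup V] [Module ℚ V] [AddCommGroup W] [Module ℚ W] (u : V →ₗ[ℚ] C.carrier)
    (g : W →ₗ[ℚ] M.carrier) :
    τ.act M ∘ₗ TensorProduct.map u g = M.actionMap ∘ₗ TensorProduct.map (τ.toFun ∘ₗ u) g := by
  rw [TwistingChain.act, LinearMap.comp_assoc, ← TensorProduct.map_comp, LinearMap.id_comp]

theorem TwistingChain.d_comp_act (τ : TwistingChain C A) (M : DGModule A) :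
    M.d ∘ₗ τ.act M = M.actionMap ∘ₗ TensorProduct.map (A.d ∘ₗ τ.toFun) .id
      - M.actionMap ∘ₗ TensorProduct.map (τ.toFun ∘ₗ parityOf C.grading) M.d := by
  rw [TwistingChain.act, ← LinearMap.comp_assoc, M.d_comp_actionMap, LinearMap.comp_assoc,
    LinearMap.add_comp, ← TensorProduct.map_comp, ← TensorProduct.map_comp, τ.parityOf_comp,
    tensorMap_neg_left, LinearMap.comp_add, LinearMap.comp_neg, LinearMap.comp_id,
    LinearMap.comp_id, sub_eq_add_neg]

theorem TwistingChain.act_comp_map_act (τ : TwistingChain C A) (M : DGModule A)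
    (u : C.carrier →ₗ[ℚ] C.carrier) :
    τ.act M ∘ₗ TensorProduct.map u (τ.act M) ∘ₗ coextCoact C M.carrier
      = M.actionMap ∘ₗ TensorProduct.map
          (A.mulMap ∘ₗ TensorProduct.map (τ.toFun ∘ₗ u) τ.toFun ∘ₗ C.comul) .id :=
  calc τ.act M ∘ₗ TensorProduct.map u (τ.act M) ∘ₗ coextCoact C M.carrier
    _ = M.actionMap ∘ₗ TensorProduct.map .id M.actionMap
          ∘ₗ TensorProduct.map (τ.toFun ∘ₗ u) (TensorProduct.map τ.toFun .id)
          ∘ₗ coextCoact C M.carrier := by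
      rw [← LinearMap.comp_assoc, τ.act_comp_map, ← LinearMap.comp_assoc (coextCoact C M.carrier),
        ← TensorProduct.map_comp, LinearMap.id_comp, ← LinearMap.comp_assoc, TwistingChain.act]
    _ = (M.actionMap ∘ₗ TensorProduct.map A.mulMap .id) ∘ₗ TensorProduct.map
          (TensorProduct.map (τ.toFun ∘ₗ u) τ.toFun ∘ₗ C.comul) .id := by
      rw [← assoc_comp_map_comul, ← M.actionMap_comp_map_id_actionMap]
      rfl
    _ = _ := by rw [LinearMap.comp_assoc, ← TensorProduct.map_comp, LinearMap.comp_id]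

theorem TwistingChain.isTwistedModule (τ : TwistingChain C A) (M : DGModule A) :
    IsTwistedModule C M.d (τ.act M) where
  d_comp_d := M.d_sq
  maurerCartan :=
    calc M.d ∘ₗ τ.act M + τ.act M ∘ₗ coextDiffFrom C M.carrier M.d (τ.act M)
      _ = M.actionMap ∘ₗ TensorProduct.map (A.d ∘ₗ τ.toFun + τ.toFun ∘ₗ C.d
            + A.mulMap ∘ₗ TensorProduct.map (τ.toFun ∘ₗ parityOf C.grading) τ.toFun
              ∘ₗ C.comul) .id := by
        simp only [coextDiffFrom, LinearMap.comp_add, TensorProduct.map_add_left, τ.d_comp_act,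
          τ.act_comp_map, τ.act_comp_map_act]
        abel
      _ = 0 := by rw [τ.twist, TensorProduct.map_zero_left, LinearMap.comp_zero]

theorem TwistingChain.act_eq_zero (τ : TwistingChain C A) (M : DGModule A) {c : C.carrier}
    (hc : τ.toFun c = 0) (x : M.carrier) : τ.act M (c ⊗ₜ[ℚ] x) = 0 := by
  rw [TwistingChain.act, LinearMap.comp_apply, TensorProduct.map_tmul, hc,
    TensorProduct.zero_tmul, map_zero]

theorem IsModuleHom.isTwistedModuleHom {M N : DGModule A} {f : M.carrier →ₗ[ℚ] N.carrier}
    (hf : IsModuleHom A M N f) (τ : TwistingChain C A) :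
    IsTwistedModuleHom C M.d (τ.act M) N.d (τ.act N) f where
  comp_d := hf.2.1
  comp_act := by
    simp only [TwistingChain.act, ← LinearMap.comp_assoc, hf.2.2]
    simp only [LinearMap.comp_assoc, ← TensorProduct.map_comp, LinearMap.id_comp, LinearMap.comp_id]

theorem twisted_coextension_preserves_quasiIso_general (τ : TwistingChain C A)
    (hτ : ∀ c ∈ C.grading 0, τ.toFun c = 0) (M N : DGModule A) (f : M.carrier →ₗ[ℚ] N.carrier)
    (hf : IsModuleHom A M N f) (hq : IsQuasiIso M.d N.d f) :
    coextDiff C A τ N.carrier N.d N.actionMap ∘ₗ TensorProduct.map .id f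
      = TensorProduct.map .id f ∘ₗ coextDiff C A τ M.carrier M.d M.actionMap ∧
    TensorProduct.map .id (TensorProduct.map .id f) ∘ₗ coextCoact C M.carrier
      = coextCoact C N.carrier ∘ₗ TensorProduct.map .id f ∧
    IsQuasiIso (coextDiff C A τ M.carrier M.d M.actionMap)
      (coextDiff C A τ N.carrier N.d N.actionMap) (TensorProduct.map .id f) := by
  have hf' := hf.isTwistedModuleHom τ
  have hact (L : DGModule A) : ∀ c ∈ C.grading 0, ∀ x, τ.act L (c ⊗ₜ[ℚ] x) = 0 :=
    fun c hc => τ.act_eq_zero L (hτ c hc)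
  exact ⟨hf'.map_comp_coextDiffFrom.symm, (coextCoact_naturality f).symm,
    hf'.isQuasiIso_map_id (τ.isTwistedModule M) (τ.isTwistedModule N) (hact M) (hact N) hq⟩

end TwistingChain

theorem CobarData.t_eq_zero_of_mem_grading_zero {C : CoaugDGCoalgebra} (Ω : CobarData C)
    (hC : C.grading 0 = Submodule.span ℚ {C.one}) {c : C.carrier} (hc : c ∈ C.grading 0) :
    Ω.t.toFun c = 0 := by
  rw [hC] at hc
  obtain ⟨r, rfl⟩ := Submodule.mem_span_singleton.1 hc
  rw [map_smul, Ω.t_one, smul_zero]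

/-- For a 2-reduced cocommutative dg coalgebra `C` with universal
twisting chain `t : C ⇝ ΩC`, if `f : A → B` is a quasi-isomorphism of left dg
`ΩC`-modules then the induced map `t_*f = id_C ⊗ f : C ⊗^t A → C ⊗^t B` is a
quasi-isomorphism of `C`-comodules. -/
theorem twisted_coextension_preserves_quasiIso (C : CoaugDGCoalgebra)
    (hred : C.TwoReduced) (hcc : C.toDGCoalgebra.Cocomm) (Ω : CobarData C)
    (A B : DGModule Ω.alg) (f : A.carrier →ₗ[ℚ] B.carrier)
    (hf : IsModuleHom Ω.alg A B f) (hq : IsQuasiIso A.d B.d f) :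
    -- `t_* f` is a chain map of the twisted coextensions,
    (coextDiff C.toDGCoalgebra Ω.alg Ω.t B.carrier B.d B.actionMap).comp
        (TensorProduct.map LinearMap.id f)
      = (TensorProduct.map LinearMap.id f).comp
          (coextDiff C.toDGCoalgebra Ω.alg Ω.t A.carrier A.d A.actionMap) ∧
    -- colinear,
    (TensorProduct.map LinearMap.id (TensorProduct.map LinearMap.id f)).comp
        (coextCoact C.toDGCoalgebra A.carrier)
      = (coextCoact C.toDGCoalgebra B.carrier).comp (TensorProduct.map LinearMap.id f) ∧
    -- and a quasi-isomorphism: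
    IsQuasiIso
      (coextDiff C.toDGCoalgebra Ω.alg Ω.t A.carrier A.d A.actionMap)
      (coextDiff C.toDGCoalgebra Ω.alg Ω.t B.carrier B.d B.actionMap)
      (TensorProduct.map LinearMap.id f) := by
  exact twisted_coextension_preserves_quasiIso_general Ω.t
    (fun _ => Ω.t_eq_zero_of_mem_grading_zero hred.1) A B f hf hq

end
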